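/- For every μ ∈ ℝ³, every σ ∈ ℝ³ and every i ∈ {1,2,3}: if σ satisfies the Pohozaev identity for μ, then R_i σ also satisfies the Pohozaev identity for μ. -/

import Mathlib

/-- The (normalized) Cartan matrix of the affine Lie algebra `B₂⁽¹⁾`. -/
noncomputable def cartanB2 : Matrix (Fin 3) (Fin 3) ℝ :=
  !![1, 0, -1; 0, 1, -1; -1/2, -1/2, 1]

/-- The generator `R_i` (for the parameter `μ`) acting on `ℝ³`. -/
noncomputable def R (μ : Fin 3 → ℝ) (i : Fin 3) (σ : Fin 3 → ℝ) : Fin 3 → ℝ :=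
  Function.update σ i (σ i + 4 * μ i - 2 * ∑ j, cartanB2 i j * σ j)

/-- The Pohozaev identity for `μ`. -/
def Poho (μ σ : Fin 3 → ℝ) : Prop :=
  (σ 0 - σ 2) ^ 2 + (σ 1 - σ 2) ^ 2 = 4 * (μ 0 * σ 0 + μ 1 * σ 1 + 2 * μ 2 * σ 2)

/-!
The matrix `A = cartanB2` becomes symmetric after scaling its rows by `d = (1, 1, 2)`, and the
Pohozaev identity says that `σ` is a zero of the inhomogeneous quadratic function
`q σ = σᵀ (diag d) A σ - 4 ∑ dⱼ μⱼ σⱼ`. On each line in the direction of the `i`-th basis vector,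
`q` is a quadratic polynomial in one variable, and `R_i` is the reflection of the line about the
vertex of that parabola. So `R_i` preserves `q` itself, not only its zero set.
-/

section Symmetrizable

open Matrix

variable {n K : Type*} [Fintype n] [DecidableEq n] [CommRing K]

/-- The generator `R_i` with parameter `μ` for an arbitrary square matrix `A` in place of the Cartan
matrix of `B₂⁽¹⁾`. It is an affine reflection when `A i i = 1`. -/
def affineReflection (A : Matrix n n K) (μ : n → K) (i : n) (σ : n → K) : n → K :=
  Function.update σ i (σ i + 4 * μ i - 2 * (A *ᵥ σ) i)

/-- The difference of the two sides of the Pohozaev identity of a matrix `A` whose rows are scaled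
by the weights `d`, chosen in applications so that `diagonal d * A` is symmetric. -/
def pohozaevDefect (A : Matrix n n K) (d μ σ : n → K) : K :=
  σ ⬝ᵥ (diagonal d * A) *ᵥ σ - 4 * ((d * μ) ⬝ᵥ σ)

theorem affineReflection_eq_add_single (A : Matrix n n K) (μ : n → K) (i : n) (σ : n → K) :
    affineReflection A μ i σ = σ + Pi.single i (4 * μ i - 2 * (A *ᵥ σ) i) := by
  rw [affineReflection, add_sub_assoc, Pi.update_eq_sub_add_single, Pi.single_add, ← add_assoc,
    sub_add_cancel]

theorem dotProduct_mulVec_add_single_self {S : Matrix n n K} (hS : S.IsSymm) (σ : n → K) (i : n)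
    (t : K) :
    (σ + Pi.single i t) ⬝ᵥ S *ᵥ (σ + Pi.single i t) =
      σ ⬝ᵥ S *ᵥ σ + 2 * t * (S *ᵥ σ) i + t ^ 2 * S i i := by
  have cross : σ ⬝ᵥ S *ᵥ Pi.single i t = t * (S *ᵥ σ) i := by
    rw [dotProduct_mulVec, ← mulVec_transpose, hS.eq, dotProduct_single, mul_comm]
  have diag : (S *ᵥ Pi.single i t) i = S i i * t := dotProduct_single _ _ _
  rw [mulVec_add, dotProduct_add, add_dotProduct, add_dotProduct, cross, single_dotProduct,
    single_dotProduct, diag]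
  ring

theorem pohozaevDefect_add_single {A : Matrix n n K} {d : n → K} (hA : (diagonal d * A).IsSymm)
    (μ σ : n → K) (i : n) (t : K) :
    pohozaevDefect A d μ (σ + Pi.single i t) =
      pohozaevDefect A d μ σ + d i * t * (A i i * t - (4 * μ i - 2 * (A *ᵥ σ) i)) := by
  have row : ((diagonal d * A) *ᵥ σ) i = d i * (A *ᵥ σ) i := by
    rw [← mulVec_mulVec, mulVec_diagonal]
  rw [pohozaevDefect, pohozaevDefect, dotProduct_mulVec_add_single_self hA, row, diagonal_mul,
    dotProduct_add, dotProduct_single, Pi.mul_apply]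
  ring

theorem generators_preserve_pohozaev_general {A : Matrix n n K} {d : n → K}
    (hA : (diagonal d * A).IsSymm) (μ σ : n → K) {i : n} (hi : A i i = 1) :
    pohozaevDefect A d μ (affineReflection A μ i σ) = pohozaevDefect A d μ σ := by
  rw [affineReflection_eq_add_single, pohozaevDefect_add_single hA, hi, one_mul, sub_self,
    mul_zero, add_zero]

end Symmetrizable

/-- The row weights that make the matrix `cartanB2` symmetric. -/
def symmetrizerB2 : Fin 3 → ℝ := ![1, 1, 2]

theorem diagonal_symmetrizerB2_mul_cartanB2 :
    Matrix.diagonal symmetrizerB2 * cartanB2 = !![1, 0, -1; 0, 1, -1; -1, -1, 2] := by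
  ext i j
  rw [Matrix.diagonal_mul]
  fin_cases i <;> fin_cases j <;> norm_num [symmetrizerB2, cartanB2]

theorem isSymm_diagonal_symmetrizerB2_mul_cartanB2 :
    (Matrix.diagonal symmetrizerB2 * cartanB2).IsSymm := by
  rw [diagonal_symmetrizerB2_mul_cartanB2]
  ext i j
  fin_cases i <;> fin_cases j <;> rfl

theorem cartanB2_apply_self (i : Fin 3) : cartanB2 i i = 1 := by
  fin_cases i <;> rfl

theorem R_eq_affineReflection (μ : Fin 3 → ℝ) (i : Fin 3) (σ : Fin 3 → ℝ) :
    R μ i σ = affineReflection cartanB2 μ i σ :=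
  rfl

theorem pohozaevDefect_cartanB2 (μ σ : Fin 3 → ℝ) :
    pohozaevDefect cartanB2 symmetrizerB2 μ σ =
      (σ 0 - σ 2) ^ 2 + (σ 1 - σ 2) ^ 2 - 4 * (μ 0 * σ 0 + μ 1 * σ 1 + 2 * μ 2 * σ 2) := by
  rw [pohozaevDefect, diagonal_symmetrizerB2_mul_cartanB2]
  simp only [dotProduct, Matrix.mulVec, Matrix.of_apply, Matrix.cons_val', Matrix.cons_val_fin_one,
    Fin.sum_univ_three, Matrix.cons_val_zero, Matrix.cons_val_one, Matrix.cons_val, symmetrizerB2,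
    Pi.mul_apply]
  ring

theorem poho_iff_pohozaevDefect_eq_zero (μ σ : Fin 3 → ℝ) :
    Poho μ σ ↔ pohozaevDefect cartanB2 symmetrizerB2 μ σ = 0 := by
  rw [Poho, pohozaevDefect_cartanB2, sub_eq_zero]

/-- Each generator `R_i` preserves the Pohozaev identity. -/
theorem generators_preserve_pohozaev (μ σ : Fin 3 → ℝ) (i : Fin 3) (h : Poho μ σ) :
    Poho μ (R μ i σ) := by
  rwa [poho_iff_pohozaevDefect_eq_zero, R_eq_affineReflection, generators_preserve_pohozaev_general
    isSymm_diagonal_symmetrizerB2_mul_cartanB2 μ σ (cartanB2_apply_self i),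
    ← poho_iff_pohozaevDefect_eq_zero]
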